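/- arXiv:2403.08745 — 2 statements merged into one kernel-verified Lean document; each statement's English description precedes it below -/
import Mathlib

section
/- Let 0 ≤ α < 2 and β, μ ∈ ℝ with α + β < 1 and μ < μ(α+β), where μ(δ) := (1−δ)²/4. Set κ_α := (2−α)/2, ν := √(μ(α+β) − μ)/κ_α and γ := (1−α−β)/2 − √(μ(α+β) − μ). Let j > 0 with J_ν'(j) ≠ 0 and define Φ(x) := ((2κ_α)^{1/2}/|J_ν'(j)|) x^{(1−α−β)/2} J_ν(j x^{κ_α}) for x ∈ (0,1). Then lim_{x→0⁺} x^{α+β+γ} Φ'(x) = (2κ_α)^{1/2} ((1−α−β)/2 + κ_α ν) j^ν / (2^ν Γ(ν+1) |J_ν'(j)|). -/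
/-!
Write `J_ν(y) = (y/2)^ν F((y/2)²)` for `y > 0`, where `F(t) = ∑ (-1)^m t^m / (m! Γ(m+ν+1))` is
analytic at `0` with `F(0) = 1/Γ(ν+1)`. With `a = (1-α-β)/2`, `s = κν` and `w(x) = (j/2)² x^{2κ}`,
the function `Φ` is a constant multiple of `x^{a+s} F(w(x))`, so that
`x^{1-a-s} Φ'(x)` is the same multiple of `(a+s) F(w(x)) + 2κ w(x) F'(w(x))`.
Since `α+β+γ = 1-a-s` and `w(x) → 0`, only `(a+s) F(0)` survives in the limit.
-/

open Set Filter

/-- The Bessel function of the first kind `J_ν`, defined by its power series. -/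
noncomputable def besselJ (ν : ℝ) (x : ℝ) : ℝ :=
  ∑' m : ℕ, ((-1 : ℝ) ^ m / ((m.factorial : ℝ) * Real.Gamma ((m : ℝ) + ν + 1)))
    * (x / 2) ^ (2 * (m : ℝ) + ν)

/-- The coefficients `(-1)^m / (m! Γ(m+ν+1))` of the Bessel series, as a series in `(x/2)²`. -/
noncomputable def besselCoeff (ν : ℝ) (m : ℕ) : ℝ :=
  (-1 : ℝ) ^ m / ((m.factorial : ℝ) * Real.Gamma ((m : ℝ) + ν + 1))

/-- The analytic factor `F` in `J_ν(x) = (x/2)^ν F((x/2)²)`. -/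
noncomputable def besselCore (ν t : ℝ) : ℝ := ∑' m : ℕ, besselCoeff ν m * t ^ m

lemma besselJ_eq_rpow_mul_core (ν : ℝ) {x : ℝ} (hx : 0 < x) :
    besselJ ν x = (x / 2) ^ ν * besselCore ν ((x / 2) ^ 2) := by
  unfold besselJ besselCore
  rw [← tsum_mul_left]
  refine tsum_congr fun m => ?_
  have h2 : 0 < x / 2 := by positivity
  rw [Real.rpow_add h2, ← pow_mul,
    show (2 * (m : ℝ)) = ((2 * m : ℕ) : ℝ) by push_cast; ring, Real.rpow_natCast]
  unfold besselCoeff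
  ring

lemma Gamma_le_Gamma_natCast_add {ν : ℝ} (hν : 0 ≤ ν) (m : ℕ) :
    Real.Gamma (ν + 1) ≤ Real.Gamma ((m : ℝ) + ν + 1) := by
  induction m with
  | zero => simp
  | succ k ih =>
    have hk : (0 : ℝ) ≤ k := k.cast_nonneg
    have hpos : 0 < Real.Gamma ((k : ℝ) + ν + 1) := Real.Gamma_pos_of_pos (by positivity)
    rw [show ((k + 1 : ℕ) : ℝ) + ν + 1 = ((k : ℝ) + ν + 1) + 1 by push_cast; ring,
      Real.Gamma_add_one (s := (k : ℝ) + ν + 1) (by positivity)]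
    nlinarith [mul_nonneg (add_nonneg hk hν) hpos.le]

lemma abs_besselCoeff_le {ν : ℝ} (hν : 0 ≤ ν) (m : ℕ) :
    |besselCoeff ν m| ≤ 1 / Real.Gamma (ν + 1) := by
  have h0 : 0 < Real.Gamma (ν + 1) := Real.Gamma_pos_of_pos (by positivity)
  have h1 := Gamma_le_Gamma_natCast_add hν m
  have hf : (1 : ℝ) ≤ m.factorial := by exact_mod_cast m.factorial_pos
  have hd : 0 < (m.factorial : ℝ) * Real.Gamma ((m : ℝ) + ν + 1) := by
    have := h0.trans_le h1
    positivity
  rw [besselCoeff, abs_div, abs_pow, abs_neg, abs_one, one_pow, abs_of_pos hd]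
  exact one_div_le_one_div_of_le h0 (by nlinarith)

/-- Bounded coefficients give radius of convergence at least `1`, which is all that is needed
near the origin. -/
lemma analyticAt_besselCore {ν : ℝ} (hν : 0 ≤ ν) : AnalyticAt ℝ (besselCore ν) 0 := by
  set p := FormalMultilinearSeries.ofScalars ℝ (besselCoeff ν) with hp
  have hr : ((1 : NNReal) : ENNReal) ≤ p.radius := by
    refine p.le_radius_of_bound (1 / Real.Gamma (ν + 1)) fun n => ?_
    rw [hp, FormalMultilinearSeries.ofScalars_norm]
    simpa using abs_besselCoeff_le hν n
  have hb := p.hasFPowerSeriesOnBall (lt_of_lt_of_le (by simp) hr)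
  have hs : p.sum = besselCore ν := by
    funext t
    have := FormalMultilinearSeries.ofScalars_sum_eq (E := ℝ) (besselCoeff ν) t
    simpa [besselCore, hp, FormalMultilinearSeries.ofScalarsSum, smul_eq_mul] using this
  rw [hs] at hb
  exact hb.analyticAt

lemma besselCore_zero (ν : ℝ) : besselCore ν 0 = 1 / Real.Gamma (ν + 1) := by
  unfold besselCore
  rw [tsum_eq_single 0 (fun m hm => by simp [hm])]
  simp [besselCoeff]

/-- For `F` analytic at `0` and `b > 0`, the derivative of `x^p F(c x^b)`, rescaled by `x^(1-p)`,
tends to `p F(0)` at `0⁺`. -/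
lemma tendsto_rpow_mul_deriv {F : ℝ → ℝ} (hF : AnalyticAt ℝ F 0) (K p c : ℝ) {b : ℝ}
    (hb : 0 < b) {Φ : ℝ → ℝ}
    (hΦ : ∀ x, 0 < x → Φ x = K * (x ^ p * F (c * x ^ b))) :
    Tendsto (fun x => x ^ (1 - p) * deriv Φ x) (nhdsWithin 0 (Ioi 0)) (nhds (K * (p * F 0))) := by
  have hw : Tendsto (fun x : ℝ => c * x ^ b) (nhdsWithin 0 (Ioi 0)) (nhds 0) := by
    have h := ((Real.continuousAt_rpow_const 0 b (Or.inr hb.le)).tendsto.const_mul c)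
    rw [Real.zero_rpow hb.ne', mul_zero] at h
    exact h.mono_left nhdsWithin_le_nhds
  have hlim : Tendsto (fun x : ℝ => K * (p * F (c * x ^ b)
      + b * (c * x ^ b) * deriv F (c * x ^ b))) (nhdsWithin 0 (Ioi 0))
      (nhds (K * (p * F 0))) := by
    have h1 := hF.continuousAt.tendsto.comp hw
    have h2 := hF.deriv.continuousAt.tendsto.comp hw
    have h := ((h1.const_mul p).add ((hw.const_mul b).mul h2)).const_mul K
    simpa using h
  refine hlim.congr' ?_
  filter_upwards [hw.eventually hF.eventually_analyticAt, self_mem_nhdsWithin] with x hFx hx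
  have hx : 0 < x := hx
  have hinner : HasDerivAt (fun x : ℝ => c * x ^ b) (c * (b * x ^ (b - 1))) x :=
    (Real.hasDerivAt_rpow_const (Or.inl hx.ne')).const_mul c
  have hcomp := hFx.differentiableAt.hasDerivAt.comp x hinner
  have hprod := (((Real.hasDerivAt_rpow_const (p := p) (Or.inl hx.ne')).mul hcomp).const_mul K)
  have heq : Φ =ᶠ[nhds x] fun x => K * (x ^ p * F (c * x ^ b)) := by
    filter_upwards [Ioi_mem_nhds hx] with y hy using hΦ y hy
  have hd : deriv Φ x = K * (p * x ^ (p - 1) * F (c * x ^ b)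
      + x ^ p * (deriv F (c * x ^ b) * (c * (b * x ^ (b - 1))))) := by
    rw [heq.deriv_eq]
    exact hprod.deriv
  have e1 : x ^ (1 - p) * x ^ (p - 1) = 1 := by
    rw [← Real.rpow_add hx]; simp
  have e2 : x ^ (1 - p) * x ^ p * x ^ (b - 1) = x ^ b := by
    rw [← Real.rpow_add hx, ← Real.rpow_add hx]; congr 1; ring
  rw [hd]
  linear_combination (-(K * p * F (c * x ^ b))) * e1
    - (K * deriv F (c * x ^ b) * c * b) * e2

theorem stmt_10 (α β μ : ℝ) (hα0 : 0 ≤ α) (hα2 : α < 2) (hαβ : α + β < 1)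
    (hμ : μ < (1 - (α + β)) ^ 2 / 4) (j : ℝ) (hj : 0 < j) :
    let κ := (2 - α) / 2
    let ν := Real.sqrt ((1 - (α + β)) ^ 2 / 4 - μ) / κ
    let γ := (1 - α - β) / 2 - Real.sqrt ((1 - (α + β)) ^ 2 / 4 - μ)
    deriv (besselJ ν) j ≠ 0 →
    let Φ : ℝ → ℝ := fun x =>
      Real.sqrt (2 * κ) / |deriv (besselJ ν) j| * (x ^ ((1 - α - β) / 2) * besselJ ν (j * x ^ κ))
    Tendsto (fun x => x ^ (α + β + γ) * deriv Φ x) (nhdsWithin 0 (Ioi 0))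
      (nhds (Real.sqrt (2 * κ) * ((1 - α - β) / 2 + κ * ν) * j ^ ν
        / (2 ^ ν * Real.Gamma (ν + 1) * |deriv (besselJ ν) j|))) := by
  intro κ ν γ _ Φ
  have hκ : 0 < κ := by simp only [κ]; linarith
  have hν : 0 ≤ ν := div_nonneg (Real.sqrt_nonneg _) hκ.le
  have hs : κ * ν = Real.sqrt ((1 - (α + β)) ^ 2 / 4 - μ) := mul_div_cancel₀ _ hκ.ne'
  have hγ : α + β + γ = 1 - ((1 - α - β) / 2 + κ * ν) := by
    rw [hs]; simp only [γ]; ring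
  have hmain := tendsto_rpow_mul_deriv (analyticAt_besselCore hν)
    (Real.sqrt (2 * κ) / |deriv (besselJ ν) j| * (j / 2) ^ ν) ((1 - α - β) / 2 + κ * ν)
    ((j / 2) ^ 2) (b := 2 * κ) (by positivity) (Φ := Φ) (by
      intro x hx
      have hxκ : 0 < x ^ κ := Real.rpow_pos_of_pos hx κ
      have h1 : (j * x ^ κ / 2) ^ ν = (j / 2) ^ ν * x ^ (κ * ν) := by
        rw [mul_div_right_comm, Real.mul_rpow (by positivity) hxκ.le, ← Real.rpow_mul hx.le]
      have h2 : (j * x ^ κ / 2) ^ 2 = (j / 2) ^ 2 * x ^ (2 * κ) := by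
        rw [two_mul κ, Real.rpow_add hx]; ring
      simp only [Φ]
      rw [besselJ_eq_rpow_mul_core ν (mul_pos hj hxκ), h1, h2, Real.rpow_add hx]
      ring)
  rw [hγ]
  convert hmain using 2
  rw [besselCore_zero, Real.div_rpow hj.le two_pos.le]
  simp only [div_eq_mul_inv, mul_inv]
  ring
end

section
/- Let 0 ≤ α < 2 and β, μ ∈ ℝ with μ < μ(α+β), where μ(δ) := (1−δ)²/4. Set κ_α := (2−α)/2 and ν := √(μ(α+β) − μ)/κ_α. For a positive zero j of J_ν with J_ν'(j) ≠ 0, define Φ_j(x) := ((2κ_α)^{1/2}/|J_ν'(j)|) x^{(1−α−β)/2} J_ν(j x^{κ_α}) for x ∈ (0,1). Then: (i) for any two distinct positive zeros j ≠ j' of J_ν (with nonvanishing J_ν' there), ∫₀¹ Φ_j(x) Φ_{j'}(x) x^β dx = 0; and (ii) for any positive zero j of J_ν with J_ν'(j) ≠ 0, ∫₀¹ Φ_j(x)² x^β dx = 1. -/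
/-!
With `s = x^{2κ}` and `J_ν(y) = (y/2)^ν G_{ν+1}(y²/4)`, where `G_c(z) = ∑ (-1)^m z^m/(m! Γ(m+c))` is
entire, both integrals become integrals of `s^ν G_{ν+1}(a s) G_{ν+1}(b s)` over `(0,1)`, with
`a = j²/4` and `b = j'²/4` zeros of `G_{ν+1}`. Termwise differentiation gives `G_c' = -G_{c+1}`,
and the contiguity relation `besselG_recurrence` is then the differential equation
`z G_c'' + c G_c' + G_c = 0`.

The equation provides explicit antiderivatives. For `a ≠ b` it is the weighted Wronskian
(`integral_besselG_mul`), which vanishes at both ends of the interval. For `a = b` it is a quadratic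
form in `G` and `G'` (`integral_besselG_sq`), whose value at `s = 1` is a multiple of
`G_{ν+1}'(a)²`, hence of `J_ν'(j)²`; this is what the normalizing constant cancels.
-/

open Set MeasureTheory

/-- The entire function `G_c(z) = ∑ (-1)^m z^m / (m! Γ(m + c))`, the regularized hypergeometric
function `₀F₁` with parameter `c` at `-z`. -/
noncomputable def besselG (c z : ℝ) : ℝ :=
  ∑' m : ℕ, ((-1 : ℝ) ^ m / ((m.factorial : ℝ) * Real.Gamma ((m : ℝ) + c))) * z ^ m

lemma Gamma_nat_add_lower {c : ℝ} (hc : 0 < c) (m : ℕ) :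
    c ^ m * Real.Gamma c ≤ Real.Gamma (m + c) := by
  induction m with
  | zero => simp
  | succ k ih =>
    have hk : (0 : ℝ) < k + c := by positivity
    have h1 : Real.Gamma ((k + 1 : ℕ) + c) = (k + c) * Real.Gamma (k + c) := by
      rw [← Real.Gamma_add_one hk.ne']
      congr 1
      push_cast
      ring
    have hΓ := Real.Gamma_pos_of_pos hk
    have hk0 : (0 : ℝ) ≤ k := k.cast_nonneg
    calc c ^ (k + 1) * Real.Gamma c = c * (c ^ k * Real.Gamma c) := by ring
      _ ≤ c * Real.Gamma (k + c) := by gcongr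
      _ ≤ (k + c) * Real.Gamma (k + c) := by gcongr; linarith
      _ = _ := h1.symm

/-- Absolute convergence, by comparison with the exponential series at `|z| / c`. -/
lemma summable_besselG_norm {c : ℝ} (hc : 0 < c) (z : ℝ) :
    Summable fun m : ℕ =>
      ‖((-1 : ℝ) ^ m / ((m.factorial : ℝ) * Real.Gamma ((m : ℝ) + c))) * z ^ m‖ := by
  refine Summable.of_nonneg_of_le (fun m => norm_nonneg _) (fun m => ?_)
    ((Real.summable_pow_div_factorial (|z| / c)).mul_right (Real.Gamma c)⁻¹)
  have h := Gamma_nat_add_lower hc m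
  have hΓc := Real.Gamma_pos_of_pos hc
  have hΓ : 0 < Real.Gamma (m + c) := Real.Gamma_pos_of_pos (by positivity)
  rw [norm_mul, norm_div, norm_pow, norm_pow, norm_neg, norm_one, one_pow, Real.norm_eq_abs,
    Real.norm_eq_abs, abs_of_pos (by positivity), div_pow]
  have h2 : (|z| ^ m / c ^ m / (m.factorial : ℝ)) * (Real.Gamma c)⁻¹
      = 1 / (m.factorial * (c ^ m * Real.Gamma c)) * |z| ^ m := by
    field_simp
  rw [h2]
  gcongr

/-- Shifting the index in the differentiated series of `G_c` gives the series of `-G_{c+1}`. -/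
lemma besselG_coeff_shift (c z : ℝ) (m : ℕ) :
    ((-1 : ℝ) ^ (m + 1) / (((m + 1).factorial : ℝ) * Real.Gamma (((m + 1 : ℕ) : ℝ) + c)))
        * (((m + 1 : ℕ) : ℝ) * z ^ (m + 1 - 1))
      = -(((-1 : ℝ) ^ m / ((m.factorial : ℝ) * Real.Gamma ((m : ℝ) + (c + 1)))) * z ^ m) := by
  have h : ((m + 1 : ℕ) : ℝ) + c = m + (c + 1) := by push_cast; ring
  have hm : ((m + 1 : ℕ) : ℝ) ≠ 0 := by positivity
  rw [h, Nat.factorial_succ, Nat.cast_mul, Nat.add_sub_cancel, pow_succ, mul_assoc,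
    ← mul_assoc, div_mul_eq_mul_div, mul_comm _ ((m + 1 : ℕ) : ℝ), mul_div_mul_left _ _ hm]
  ring

lemma hasDerivAt_besselG {c : ℝ} (hc : 0 < c) (z : ℝ) :
    HasDerivAt (besselG c) (-besselG (c + 1) z) z := by
  set R : ℝ := |z| + 1
  let a : ℕ → ℝ := fun m => (-1 : ℝ) ^ m / ((m.factorial : ℝ) * Real.Gamma ((m : ℝ) + c))
  have hu : Summable fun m : ℕ => ‖a m * ((m : ℝ) * R ^ (m - 1))‖ := by
    rw [← summable_nat_add_iff 1]
    have h := summable_besselG_norm (show 0 < c + 1 by positivity) R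
    refine h.congr fun m => ?_
    rw [besselG_coeff_shift c R m, norm_neg]
  have key := hasDerivAt_tsum_of_isPreconnected (g := fun m y => a m * y ^ m)
    (g' := fun m y => a m * ((m : ℝ) * y ^ (m - 1))) (y := z) (y₀ := z) hu
    Metric.isOpen_ball (convex_ball (0 : ℝ) R).isPreconnected
    (fun m y _ => (hasDerivAt_pow m y).const_mul (a m))
    (fun m y hy => by
      have hy' : ‖y‖ ≤ ‖R‖ := by
        rw [mem_ball_zero_iff] at hy
        exact hy.le.trans (le_abs_self R)
      rw [norm_mul, norm_mul, norm_mul, norm_mul, norm_pow, norm_pow]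
      gcongr)
    (by simp [R]) (summable_besselG_norm hc z).of_norm (by simp [R])
  have hz : Summable fun m : ℕ => a m * ((m : ℝ) * z ^ (m - 1)) := by
    rw [← summable_nat_add_iff 1]
    refine (summable_besselG_norm (show 0 < c + 1 by positivity) z).of_norm.neg.congr fun m => ?_
    rw [besselG_coeff_shift c z m]
  convert! key using 1
  rw [hz.tsum_eq_zero_add, besselG, ← tsum_neg]
  simp only [CharP.cast_eq_zero, zero_mul, mul_zero, zero_add]
  exact tsum_congr fun m => (besselG_coeff_shift c z m).symm

lemma continuous_besselG {c : ℝ} (hc : 0 < c) : Continuous (besselG c) :=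
  continuous_iff_continuousAt.2 fun z => (hasDerivAt_besselG hc z).continuousAt

/-- The contiguity relation of `₀F₁`; since `G_c' = -G_{c+1}`, it is the differential equation
`z G_c'' + c G_c' + G_c = 0`. -/
lemma besselG_recurrence {c : ℝ} (hc : 0 < c) (z : ℝ) :
    besselG c z = c * besselG (c + 1) z - z * besselG (c + 1 + 1) z := by
  have h1 := (summable_besselG_norm (show 0 < c + 1 by positivity) z).of_norm
  have h2 := (summable_besselG_norm (show 0 < c + 1 + 1 by positivity) z).of_norm
  let b : ℕ → ℝ := fun m => ((-1 : ℝ) ^ m / ((m.factorial : ℝ) * Real.Gamma ((m : ℝ) + (c + 1))))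
      * ((m : ℝ) * z ^ m)
  have hb : ∀ m, b (m + 1) = -z * (((-1 : ℝ) ^ m / ((m.factorial : ℝ) *
      Real.Gamma ((m : ℝ) + (c + 1 + 1)))) * z ^ m) := by
    intro m
    have h := besselG_coeff_shift (c + 1) z m
    simp only [Nat.add_sub_cancel] at h
    simp only [b]
    linear_combination z * h
  have hbs : Summable b := by
    rw [← summable_nat_add_iff 1]
    exact (h2.mul_left (-z)).congr fun m => (hb m).symm
  have hbt : ∑' m, b m = -z * besselG (c + 1 + 1) z := by
    rw [hbs.tsum_eq_zero_add, besselG, ← tsum_mul_left]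
    simp only [hb]
    simp [b]
  have : besselG c z = c * besselG (c + 1) z + ∑' m, b m := by
    rw [besselG, besselG, ← tsum_mul_left, ← (h1.mul_left c).tsum_add hbs]
    refine tsum_congr fun m => ?_
    have hm : (0 : ℝ) < m + c := by positivity
    have hΓ := (Real.Gamma_pos_of_pos hm).ne'
    have hf : (m.factorial : ℝ) ≠ 0 := by positivity
    simp only [b]
    rw [← add_assoc, Real.Gamma_add_one hm.ne']
    field_simp
    ring
  rw [this, hbt]
  ring

lemma besselJ_eq {ν x : ℝ} (hx : 0 < x) :
    besselJ ν x = (x / 2) ^ ν * besselG (ν + 1) (x ^ 2 / 4) := by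
  have hx2 : 0 < x / 2 := by positivity
  rw [besselJ, besselG, ← tsum_mul_left]
  refine tsum_congr fun m => ?_
  have h : (x / 2) ^ (2 * (m : ℝ) + ν) = (x / 2) ^ ν * (x ^ 2 / 4) ^ m := by
    rw [add_comm, Real.rpow_add hx2, show (2 * (m : ℝ)) = ((2 * m : ℕ) : ℝ) by push_cast; ring,
      Real.rpow_natCast, pow_mul]
    congr 2
    ring
  rw [h, ← add_assoc]
  ring

lemma besselG_eq_zero {ν j : ℝ} (hj : 0 < j) (h : besselJ ν j = 0) :
    besselG (ν + 1) (j ^ 2 / 4) = 0 := by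
  rw [besselJ_eq hj] at h
  exact (mul_eq_zero.1 h).resolve_left (by positivity)

lemma deriv_besselJ_at_zero {ν j : ℝ} (hν : 0 ≤ ν) (hj : 0 < j) (h : besselJ ν j = 0) :
    deriv (besselJ ν) j = -((j / 2) ^ ν * (j / 2) * besselG (ν + 1 + 1) (j ^ 2 / 4)) := by
  have h0 := besselG_eq_zero hj h
  have hG : HasDerivAt (fun x : ℝ => besselG (ν + 1) (x ^ 2 / 4))
      (-besselG (ν + 1 + 1) (j ^ 2 / 4) * (j / 2)) j := by
    refine HasDerivAt.comp (h := fun x : ℝ => x ^ 2 / 4) j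
      (hasDerivAt_besselG (show 0 < ν + 1 by positivity) (j ^ 2 / 4)) ?_
    convert! (hasDerivAt_pow 2 j).div_const 4 using 1
    norm_num
    ring
  have hP : HasDerivAt (fun x : ℝ => (x / 2) ^ ν) (1 / 2 * ν * (j / 2) ^ (ν - 1)) j :=
    ((hasDerivAt_id' j).div_const 2).rpow_const (Or.inl (by positivity))
  have hJ : HasDerivAt (besselJ ν) _ j := (hP.mul hG).congr_of_eventuallyEq <| by
    filter_upwards [lt_mem_nhds hj] with x hx using besselJ_eq hx
  rw [hJ.deriv, h0]
  ring

/-- Fundamental theorem of calculus after the substitution `s = x ^ γ`. -/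
lemma integral_subst {γ ν : ℝ} (hγ : 0 < γ) (hν : 0 ≤ ν) {f A : ℝ → ℝ} (hf : Continuous f)
    (hA : ContinuousOn A (Icc 0 1)) (hA' : ∀ s, 0 < s → HasDerivAt A (s ^ ν * f s) s) :
    ∫ x in Ioo (0 : ℝ) 1, x ^ (γ - 1) * ((x ^ γ) ^ ν * f (x ^ γ)) = (A 1 - A 0) / γ := by
  have hcγ : Continuous fun x : ℝ => x ^ γ := Real.continuous_rpow_const hγ.le
  have hint : IntervalIntegrable (fun x : ℝ => x ^ (γ - 1) * ((x ^ γ) ^ ν * f (x ^ γ)))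
      volume 0 1 := by
    refine (intervalIntegral.intervalIntegrable_rpow' (by linarith)).mul_continuousOn ?_
    exact (((Real.continuous_rpow_const hν).comp hcγ).mul (hf.comp hcγ)).continuousOn
  have key := intervalIntegral.integral_eq_sub_of_hasDerivAt_of_le
    (f := fun x : ℝ => A (x ^ γ) / γ) zero_le_one
    ((hA.comp hcγ.continuousOn fun x hx =>
      ⟨Real.rpow_nonneg hx.1 _, Real.rpow_le_one hx.1 hx.2 hγ.le⟩).div_const γ)
    (fun x hx => by
      have h1 := (hA' (x ^ γ) (Real.rpow_pos_of_pos hx.1 _)).comp x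
        (Real.hasDerivAt_rpow_const (p := γ) (Or.inl hx.1.ne'))
      convert! h1.div_const γ using 1
      field_simp) hint
  rw [intervalIntegral.integral_of_le zero_le_one, integral_Ioc_eq_integral_Ioo] at key
  rw [key, Real.one_rpow, Real.zero_rpow hγ.ne']
  ring

lemma hasDerivAt_besselG_scaled {c : ℝ} (hc : 0 < c) (a s : ℝ) :
    HasDerivAt (fun s => besselG c (a * s)) (-besselG (c + 1) (a * s) * a) s := by
  refine (hasDerivAt_besselG hc (a * s)).comp s ?_
  simpa using (hasDerivAt_id' s).const_mul a

/-- Orthogonality for the weight `s ^ ν`. For `g_a(s) = G_{ν+1}(a s)` the equation reads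
`(s^{ν+1} g_a')' = -a s^ν g_a`, so the weighted Wronskian `s^{ν+1} (g_a' g_b - g_a g_b')` is an
antiderivative of `(b - a) s^ν g_a g_b`. -/
lemma integral_besselG_mul {γ ν a b : ℝ} (hγ : 0 < γ) (hν : 0 ≤ ν) (hab : a ≠ b)
    (ha : besselG (ν + 1) a = 0) (hb : besselG (ν + 1) b = 0) :
    ∫ x in Ioo (0 : ℝ) 1, x ^ (γ - 1) *
      ((x ^ γ) ^ ν * (besselG (ν + 1) (a * x ^ γ) * besselG (ν + 1) (b * x ^ γ))) = 0 := by
  have h1 : 0 < ν + 1 := by positivity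
  have h2 : 0 < ν + 1 + 1 := by positivity
  have hba : b - a ≠ 0 := sub_ne_zero.2 hab.symm
  have c1 := continuous_besselG h1
  have c2 := continuous_besselG h2
  have key := integral_subst hγ hν
    (f := fun s => besselG (ν + 1) (a * s) * besselG (ν + 1) (b * s))
    (A := fun s => s ^ (ν + 1) * (-besselG (ν + 1 + 1) (a * s) * a * besselG (ν + 1) (b * s)
      - besselG (ν + 1) (a * s) * (-besselG (ν + 1 + 1) (b * s) * b)) / (b - a))
    (by fun_prop)
    (by
      have := Real.continuous_rpow_const h1.le
      fun_prop)
    (fun s hs => by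
      have hp : HasDerivAt (fun s : ℝ => s ^ (ν + 1)) ((ν + 1) * s ^ ν) s := by
        convert! Real.hasDerivAt_rpow_const (p := ν + 1) (Or.inl hs.ne') using 1
        ring_nf
      have hs1 : s ^ (ν + 1) = s ^ ν * s := by rw [Real.rpow_add hs, Real.rpow_one]
      have ga := hasDerivAt_besselG_scaled h1 a s
      have gb := hasDerivAt_besselG_scaled h1 b s
      have ga' := hasDerivAt_besselG_scaled h2 a s
      have gb' := hasDerivAt_besselG_scaled h2 b s
      have ra := besselG_recurrence h1 (a * s)
      have rb := besselG_recurrence h1 (b * s)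
      convert! (hp.mul (((ga'.neg.mul_const a).mul gb).sub
        (ga.mul (gb'.neg.mul_const b)))).div_const (b - a) using 1
      rw [eq_div_iff hba, hs1]
      simp only [Pi.mul_apply, Pi.sub_apply, Pi.neg_apply]
      linear_combination (-a * besselG (ν + 1) (b * s) * s ^ ν) * ra
        + (b * besselG (ν + 1) (a * s) * s ^ ν) * rb)
  rw [key]
  simp [ha, hb, Real.zero_rpow h1.ne']

/-- Normalization for the weight `s ^ ν`. For `g(s) = G_{ν+1}(a s)`, the function
`s^{ν+1} (a g² + s g'² + ν g g')` is an antiderivative of `a s^ν g²`. -/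
lemma integral_besselG_sq {γ ν a : ℝ} (hγ : 0 < γ) (hν : 0 ≤ ν)
    (ha : besselG (ν + 1) a = 0) :
    ∫ x in Ioo (0 : ℝ) 1, x ^ (γ - 1) * ((x ^ γ) ^ ν * besselG (ν + 1) (a * x ^ γ) ^ 2)
      = a * besselG (ν + 1 + 1) a ^ 2 / γ := by
  have h1 : 0 < ν + 1 := by positivity
  have h2 : 0 < ν + 1 + 1 := by positivity
  have c1 := continuous_besselG h1
  have c2 := continuous_besselG h2
  have key := integral_subst hγ hν
    (f := fun s => besselG (ν + 1) (a * s) ^ 2)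
    (A := fun s => s ^ (ν + 1) * (besselG (ν + 1) (a * s) ^ 2
      + (s * besselG (ν + 1 + 1) (a * s) ^ 2 * a
        - ν * (besselG (ν + 1) (a * s) * besselG (ν + 1 + 1) (a * s)))))
    (by fun_prop)
    (by
      have := Real.continuous_rpow_const h1.le
      fun_prop)
    (fun s hs => by
      have hp : HasDerivAt (fun s : ℝ => s ^ (ν + 1)) ((ν + 1) * s ^ ν) s := by
        convert! Real.hasDerivAt_rpow_const (p := ν + 1) (Or.inl hs.ne') using 1
        ring_nf
      have hs1 : s ^ (ν + 1) = s ^ ν * s := by rw [Real.rpow_add hs, Real.rpow_one]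
      have ga := hasDerivAt_besselG_scaled h1 a s
      have ga' := hasDerivAt_besselG_scaled h2 a s
      have ra := besselG_recurrence h1 (a * s)
      convert! hp.mul ((ga.pow 2).add ((((hasDerivAt_id' s).mul (ga'.pow 2)).mul_const a).sub
        ((ga.mul ga').const_mul ν))) using 1
      rw [hs1]
      simp only [Pi.mul_apply, Pi.sub_apply, Pi.add_apply, Pi.pow_apply]
      norm_num
      linear_combination (-s ^ ν * (ν * besselG (ν + 1) (a * s)
        - 2 * a * s * besselG (ν + 1 + 1) (a * s))) * ra)
  rw [key]
  simp [ha, Real.zero_rpow h1.ne']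
  ring

/-- The substitution identity `J_ν(j x^κ) = (j/2)^ν (x^κ)^ν G_{ν+1}((j²/4) x^{2κ})`. -/
lemma besselJ_scaled {ν κ j x : ℝ} (hj : 0 < j) (hx : 0 < x) :
    besselJ ν (j * x ^ κ)
      = (j / 2) ^ ν * (x ^ κ) ^ ν * besselG (ν + 1) (j ^ 2 / 4 * x ^ (2 * κ)) := by
  have hk : 0 < x ^ κ := Real.rpow_pos_of_pos hx _
  rw [besselJ_eq (by positivity), mul_div_right_comm, Real.mul_rpow (by positivity) hk.le]
  congr 2
  rw [two_mul, Real.rpow_add hx]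
  ring

/-- The product of the power weights is `x^{1-α} = x^{2κ-1}` times the weight `(x^{2κ})^ν`. -/
lemma weight_identity {α β ν x : ℝ} (hx : 0 < x) :
    (x ^ ((1 - α - β) / 2)) ^ 2 * ((x ^ ((2 - α) / 2)) ^ ν) ^ 2 * x ^ β
      = x ^ (2 * ((2 - α) / 2) - 1) * (x ^ (2 * ((2 - α) / 2))) ^ ν := by
  rw [← Real.rpow_natCast, ← Real.rpow_natCast, ← Real.rpow_mul hx.le, ← Real.rpow_mul hx.le,
    ← Real.rpow_mul hx.le, ← Real.rpow_mul hx.le, ← Real.rpow_add hx, ← Real.rpow_add hx,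
    ← Real.rpow_add hx]
  congr 1
  push_cast
  ring

theorem stmt_12 (α β μ : ℝ) (hα0 : 0 ≤ α) (hα2 : α < 2)
    (hμ : μ < (1 - (α + β)) ^ 2 / 4) :
    let κ := (2 - α) / 2
    let ν := Real.sqrt ((1 - (α + β)) ^ 2 / 4 - μ) / κ
    let Φ : ℝ → ℝ → ℝ := fun j x =>
      Real.sqrt (2 * κ) / |deriv (besselJ ν) j| * (x ^ ((1 - α - β) / 2) * besselJ ν (j * x ^ κ))
    (∀ j j', 0 < j → besselJ ν j = 0 → deriv (besselJ ν) j ≠ 0 →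
        0 < j' → besselJ ν j' = 0 → deriv (besselJ ν) j' ≠ 0 → j ≠ j' →
        ∫ x in Ioo (0:ℝ) 1, Φ j x * Φ j' x * x ^ β = 0) ∧
    (∀ j, 0 < j → besselJ ν j = 0 → deriv (besselJ ν) j ≠ 0 →
        ∫ x in Ioo (0:ℝ) 1, Φ j x ^ 2 * x ^ β = 1) := by
  intro κ ν Φ
  have hκ : 0 < κ := by simp only [κ]; linarith
  have hν : 0 ≤ ν := by positivity
  -- On `(0, 1)` the integrand is a constant times the integrand of the reduced problem.
  have hΦ : ∀ j j', 0 < j → 0 < j' → ∀ x ∈ Ioo (0 : ℝ) 1, Φ j x * Φ j' x * x ^ β =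
      (2 * κ / (|deriv (besselJ ν) j| * |deriv (besselJ ν) j'|) * ((j / 2) ^ ν * (j' / 2) ^ ν)) *
      (x ^ (2 * κ - 1) * ((x ^ (2 * κ)) ^ ν * (besselG (ν + 1) (j ^ 2 / 4 * x ^ (2 * κ)) *
        besselG (ν + 1) (j' ^ 2 / 4 * x ^ (2 * κ))))) := by
    intro j j' hj hj' x hx
    have hw := weight_identity (α := α) (β := β) (ν := ν) hx.1
    have hsq : Real.sqrt (2 * κ) ^ 2 = 2 * κ := Real.sq_sqrt (by positivity)
    have hdiv : Real.sqrt (2 * κ) / |deriv (besselJ ν) j|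
        * (Real.sqrt (2 * κ) / |deriv (besselJ ν) j'|)
        = 2 * κ / (|deriv (besselJ ν) j| * |deriv (besselJ ν) j'|) := by
      rw [div_mul_div_comm, ← pow_two, hsq]
    simp only [Φ]
    rw [besselJ_scaled hj hx.1, besselJ_scaled hj' hx.1, ← hdiv]
    change (x ^ ((1 - α - β) / 2)) ^ 2 * ((x ^ κ) ^ ν) ^ 2 * x ^ β
      = x ^ (2 * κ - 1) * (x ^ (2 * κ)) ^ ν at hw
    linear_combination (Real.sqrt (2 * κ) / |deriv (besselJ ν) j|
        * (Real.sqrt (2 * κ) / |deriv (besselJ ν) j'|) * ((j / 2) ^ ν * (j' / 2) ^ ν)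
        * (besselG (ν + 1) (j ^ 2 / 4 * x ^ (2 * κ))
          * besselG (ν + 1) (j' ^ 2 / 4 * x ^ (2 * κ)))) * hw
  refine ⟨fun j j' hj h0 _ hj' h0' _ hne => ?_, fun j hj h0 hd => ?_⟩
  · rw [setIntegral_congr_fun measurableSet_Ioo (hΦ j j' hj hj'), integral_const_mul,
      integral_besselG_mul (by positivity) hν ?_ (besselG_eq_zero hj h0)
        (besselG_eq_zero hj' h0'), mul_zero]
    intro h
    exact hne ((pow_left_inj₀ hj.le hj'.le two_ne_zero).1 (by linarith))
  · have hΦ2 : ∀ x ∈ Ioo (0 : ℝ) 1, Φ j x ^ 2 * x ^ β =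
        (2 * κ / deriv (besselJ ν) j ^ 2 * ((j / 2) ^ ν) ^ 2) *
        (x ^ (2 * κ - 1) * ((x ^ (2 * κ)) ^ ν * besselG (ν + 1) (j ^ 2 / 4 * x ^ (2 * κ)) ^ 2)) := by
      intro x hx
      rw [pow_two (Φ j x), hΦ j j hj hj x hx, abs_mul_abs_self]
      ring
    rw [setIntegral_congr_fun measurableSet_Ioo hΦ2, integral_const_mul,
      integral_besselG_sq (by positivity) hν (besselG_eq_zero hj h0)]
    have hJ := deriv_besselJ_at_zero hν hj h0
    have hJ2 : deriv (besselJ ν) j ^ 2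
        = ((j / 2) ^ ν) ^ 2 * (j ^ 2 / 4 * besselG (ν + 1 + 1) (j ^ 2 / 4) ^ 2) := by
      rw [hJ]
      ring
    rw [div_mul_eq_mul_div, div_mul_div_comm, div_eq_one_iff_eq (by positivity), hJ2]
    ring
end
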